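/- Let (f_j)_{j≥1} be real numbers in [0,1] and (Δ_j)_{j≥1} probability distributions on the nonnegative integers, and define the delayed composite observation x_t = Σ_{j=1}^t f_j·Δ_j({t − j}) for t ≥ 1. Suppose the interval of integers [1, b] is partitioned into L consecutive blocks [t_1, t′_1], [t_2, t′_2], …, [t_L, t′_L] (so t_1 = 1, t_{l+1} = t′_l + 1, t′_L = b), and let the last block be [a, b] = [t_L, t′_L]. For each block l define C′_l = Σ_{j = t_l}^{t′_l} Δ_j({x > t′_l − j}). Then | Σ_{t=a}^{b} (x_t − f_t) | ≤ Σ_{l=1}^{L} C′_l ≤ L · max_{1 ≤ l ≤ L} C′_l. -/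

import Mathlib

open Finset

/-- The tail probability `p({x ≥ s})` of a distribution `p` on the nonnegative integers. -/
noncomputable def tailProb (p : ℕ → ℝ) (s : ℕ) : ℝ :=
  ∑' x : ℕ, if s ≤ x then p x else 0

lemma tailProb_summable {p : ℕ → ℝ} (hn : ∀ x, 0 ≤ p x) (hs : HasSum p 1) (s : ℕ) :
    Summable (fun x : ℕ => if s ≤ x then p x else 0) := by
  refine Summable.of_nonneg_of_le (fun x => ?_) (fun x => ?_) hs.summable
  · split_ifs
    · exact hn x
    · exact le_rfl
  · split_ifs
    · exact le_rfl
    · exact hn x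

lemma tailProb_nonneg {p : ℕ → ℝ} (hn : ∀ x, 0 ≤ p x) (s : ℕ) : 0 ≤ tailProb p s := by
  refine tsum_nonneg (fun x => ?_)
  split_ifs
  · exact hn x
  · exact le_rfl

lemma tailProb_zero {p : ℕ → ℝ} (hs : HasSum p 1) : tailProb p 0 = 1 := by
  simp [tailProb, hs.tsum_eq]

lemma tailProb_succ {p : ℕ → ℝ} (hn : ∀ x, 0 ≤ p x) (hs : HasSum p 1) (s : ℕ) :
    tailProb p s = p s + tailProb p (s + 1) := by
  have h1 : HasSum (fun x : ℕ => if x = s then p s else 0) (p s) := hasSum_ite_eq s (p s)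
  have h2 := (h1.add (tailProb_summable hn hs (s + 1)).hasSum).tsum_eq
  unfold tailProb
  rw [← h2]
  refine tsum_congr (fun x => ?_)
  rcases lt_trichotomy x s with h | h | h
  · rw [if_neg (by omega), if_neg (by omega), if_neg (by omega)]; simp
  · subst h; simp
  · rw [if_pos (by omega), if_neg (by omega), if_pos (by omega)]; simp

lemma tailProb_antitone {p : ℕ → ℝ} (hn : ∀ x, 0 ≤ p x) (hs : HasSum p 1) :
    Antitone (tailProb p) := by
  refine antitone_nat_of_succ_le (fun s => ?_)
  rw [tailProb_succ hn hs s]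
  linarith [hn s]

/-- Block decomposition of the delay overflow: if `[1, b]` is partitioned into `L`
consecutive blocks, then the deviation of the delayed composite observations from the
rewards on the last block is bounded by the sum of the per-block escape masses `C′_l`,
which is at most `L` times their maximum. -/
theorem delay_block_decomposition_bound
    (f : ℕ → ℝ) (hf : ∀ j, f j ∈ Set.Icc (0 : ℝ) 1)
    (Δ : ℕ → ℕ → ℝ) (hnn : ∀ j x, 0 ≤ Δ j x) (hsum : ∀ j, HasSum (Δ j) 1)
    (x : ℕ → ℝ) (hx : ∀ t : ℕ, x t = ∑ j ∈ Finset.Icc 1 t, f j * Δ j (t - j))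
    (L : ℕ) (hL : 1 ≤ L)
    (ts te : ℕ → ℕ)
    (hts1 : ts 1 = 1)
    (hblocks : ∀ l ∈ Finset.Icc 1 L, ts l ≤ te l)
    (hnext : ∀ l : ℕ, 1 ≤ l → l < L → ts (l + 1) = te l + 1)
    (a b : ℕ) (ha : a = ts L) (hb : b = te L)
    (C' : ℕ → ℝ)
    (hC' : ∀ l, C' l = ∑ j ∈ Finset.Icc (ts l) (te l), tailProb (Δ j) (te l - j + 1)) :
    |∑ t ∈ Finset.Icc a b, (x t - f t)| ≤ ∑ l ∈ Finset.Icc 1 L, C' l ∧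
      ∑ l ∈ Finset.Icc 1 L, C' l ≤
        (L : ℝ) * (Finset.Icc 1 L).sup' (Finset.nonempty_Icc.mpr hL) C' := by
  have hf0 : ∀ j, 0 ≤ f j := fun j => (hf j).1
  have hf1 : ∀ j, f j ≤ 1 := fun j => (hf j).2
  have htn : ∀ j s, 0 ≤ tailProb (Δ j) s := fun j s => tailProb_nonneg (hnn j) s
  -- mass in flight just before time `T`
  let E : ℕ → ℝ := fun T => ∑ j ∈ Finset.Ico 1 T, f j * tailProb (Δ j) (T - j)
  have hE0 : ∀ T, 0 ≤ E T := fun T =>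
    Finset.sum_nonneg (fun j _ => mul_nonneg (hf0 j) (htn j _))
  have hstep : ∀ t, 1 ≤ t → x t - f t = E t - E (t + 1) := by
    intro t ht
    have h1 : E t + f t = ∑ j ∈ Finset.Ico 1 (t + 1), f j * tailProb (Δ j) (t - j) := by
      rw [Finset.sum_Ico_succ_top ht, Nat.sub_self, tailProb_zero (hsum t), mul_one]
    have h2 : ∑ j ∈ Finset.Ico 1 (t + 1), f j * tailProb (Δ j) (t - j) = x t + E (t + 1) := by
      have hI : Finset.Icc 1 t = Finset.Ico 1 (t + 1) := by
        ext j; simp only [Finset.mem_Icc, Finset.mem_Ico]; omega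
      rw [hx t, hI, ← Finset.sum_add_distrib]
      refine Finset.sum_congr rfl (fun j hj => ?_)
      have hj' := Finset.mem_Ico.mp hj
      rw [tailProb_succ (hnn j) (hsum j) (t - j), show t + 1 - j = t - j + 1 by omega]
      ring
    linarith
  have htel : ∀ a b, 1 ≤ a → a ≤ b → ∑ t ∈ Finset.Ico a b, (x t - f t) = E a - E b := by
    intro a b h1 hab
    induction b, hab using Nat.le_induction with
    | base => simp
    | succ n hn ih =>
      rw [Finset.sum_Ico_succ_top hn, ih, hstep n (by omega)]
      ring
  have hCn : ∀ l, 0 ≤ C' l := fun l => by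
    rw [hC' l]
    exact Finset.sum_nonneg (fun j _ => htn j _)
  have hblk : ∀ l, 1 ≤ ts l → ts l ≤ te l → E (te l + 1) ≤ E (ts l) + C' l := by
    intro l h1 h2
    have hI : Finset.Icc (ts l) (te l) = Finset.Ico (ts l) (te l + 1) := by
      ext j; simp only [Finset.mem_Icc, Finset.mem_Ico]; omega
    rw [hC' l, hI]
    change ∑ j ∈ Finset.Ico 1 (te l + 1), f j * tailProb (Δ j) (te l + 1 - j) ≤ _
    rw [← Finset.sum_Ico_consecutive _ h1 (show ts l ≤ te l + 1 by omega)]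
    refine add_le_add (Finset.sum_le_sum (fun j hj => ?_)) (Finset.sum_le_sum (fun j hj => ?_))
    · exact mul_le_mul_of_nonneg_left
        (tailProb_antitone (hnn j) (hsum j) (by omega)) (hf0 j)
    · have hj' := Finset.mem_Ico.mp hj
      rw [show te l + 1 - j = te l - j + 1 by omega]
      exact mul_le_of_le_one_left (htn j _) (hf1 j)
  have hind : ∀ l, l + 1 ≤ L → 1 ≤ ts (l + 1) ∧ E (ts (l + 1)) ≤ ∑ i ∈ Finset.Icc 1 l, C' i := by
    intro l
    induction l with
    | zero => intro _; simp [hts1, E]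
    | succ n ih =>
      intro h
      obtain ⟨h1, h2⟩ := ih (by omega)
      rw [hnext (n + 1) (by omega) (by omega)]
      refine ⟨by omega, ?_⟩
      have h3 := hblk (n + 1) h1 (hblocks _ (Finset.mem_Icc.mpr ⟨by omega, by omega⟩))
      rw [Finset.sum_Icc_succ_top (by omega)]
      linarith
  refine ⟨?_, ?_⟩
  · obtain ⟨n, rfl⟩ : ∃ n, L = n + 1 := ⟨L - 1, by omega⟩
    obtain ⟨h1, h2⟩ := hind n le_rfl
    have hle := hblocks (n + 1) (Finset.mem_Icc.mpr ⟨hL, le_rfl⟩)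
    have h3 := hblk (n + 1) h1 hle
    have hI : Finset.Icc a b = Finset.Ico (ts (n + 1)) (te (n + 1) + 1) := by
      ext j; simp only [Finset.mem_Icc, Finset.mem_Ico]; omega
    rw [hI, htel _ _ h1 (by omega), Finset.sum_Icc_succ_top (by omega), abs_le]
    have h4 := hE0 (ts (n + 1))
    have h5 := hE0 (te (n + 1) + 1)
    have h6 := hCn (n + 1)
    constructor <;> linarith
  · have h := Finset.sum_le_card_nsmul (Finset.Icc 1 L) C'
      ((Finset.Icc 1 L).sup' (Finset.nonempty_Icc.mpr hL) C')
      (fun l hl => Finset.le_sup' C' hl)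
    simpa [nsmul_eq_mul] using h
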